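/- arXiv:1405.3698 — 2 statements merged into one kernel-verified Lean document; each statement's English description precedes it below -/
import Mathlib

section
/- Let V be an 8-dimensional oriented vector space, H a 7-dimensional subspace, φ a positive three-form on H, and v ∈ V transverse to H inducing the orientation on H. Let g be the unique inner product on V agreeing on H with the inner product associated to φ, with ‖v‖ = 1 and v ⊥ H. Then Ω = v♭ ∧ φ + ∗(v♭ ∧ φ) is an admissible four-form on V, and the inner product on V induced by Ω is exactly g. -/
noncomputable section

open scoped RealInnerProductSpace BigOperators

def pickCoords {n k : ℕ} (idx : Fin k → Fin n) : (Fin n → ℝ) →ₗ[ℝ] (Fin k → ℝ) :=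
  LinearMap.pi fun a => LinearMap.proj (idx a)

def dxs {n k : ℕ} (idx : Fin k → Fin n) : (Fin n → ℝ) [⋀^Fin k]→ₗ[ℝ] ℝ :=
  (Matrix.detRowAlternating).compLinearMap (pickCoords idx)

def wedgeAM {V : Type*} [AddCommGroup V] [Module ℝ V] {k l : ℕ}
    (α : V [⋀^Fin k]→ₗ[ℝ] ℝ) (β : V [⋀^Fin l]→ₗ[ℝ] ℝ) : V [⋀^Fin (k + l)]→ₗ[ℝ] ℝ :=
  (TensorProduct.lid ℝ ℝ).toLinearMap.compAlternatingMap
    ((α.domCoprod β).domDomCongr finSumFinEquiv)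

/-- The Cayley four-form `Ω₀` on `ℝ⁸` (with `0`-based indices). -/
def Omega0 : (Fin 8 → ℝ) [⋀^Fin 4]→ₗ[ℝ] ℝ :=
  dxs ![0,1,2,3] + dxs ![0,1,4,5] + dxs ![0,1,6,7] + dxs ![0,2,4,6]
    - dxs ![0,2,5,7] - dxs ![0,3,4,7] - dxs ![0,3,5,6] - dxs ![1,2,4,7]
    - dxs ![1,2,5,6] - dxs ![1,3,4,6] + dxs ![1,3,5,7] + dxs ![2,3,4,5]
    + dxs ![2,3,6,7] + dxs ![4,5,6,7]

/-- The standard `G₂` three-form on `ℝ⁷` (0-based indices). -/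
def phi0 : (Fin 7 → ℝ) [⋀^Fin 3]→ₗ[ℝ] ℝ :=
  dxs ![0,1,2] + dxs ![0,3,4] + dxs ![0,5,6] + dxs ![1,3,5]
    - dxs ![1,4,6] - dxs ![2,3,6] - dxs ![2,4,5]

/-- The `G₂` three-form `φ₀` written in the last seven coordinates of `ℝ⁸` and extended to `ℝ⁸`
annihilating `e₁`. -/
def phi0ext : (Fin 8 → ℝ) [⋀^Fin 3]→ₗ[ℝ] ℝ :=
  dxs ![1,2,3] + dxs ![1,4,5] + dxs ![1,6,7] + dxs ![2,4,6]
    - dxs ![2,5,7] - dxs ![3,4,7] - dxs ![3,5,6]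

/-- The inclusion `ℝ⁷ ↪ ℝ⁸` onto the last seven coordinates. -/
def incl7 : (Fin 7 → ℝ) →ₗ[ℝ] (Fin 8 → ℝ) :=
  LinearMap.pi fun i : Fin 8 =>
    Fin.cases (motive := fun _ => (Fin 7 → ℝ) →ₗ[ℝ] ℝ) 0 (fun j => LinearMap.proj j) i

variable {V : Type*} [NormedAddCommGroup V] [InnerProductSpace ℝ V] [FiniteDimensional ℝ V]

/-- `f : ℝ⁸ → V` is orientation-preserving. -/
def OrientedEquiv (o : Orientation ℝ V (Fin 8)) (f : (Fin 8 → ℝ) ≃ₗ[ℝ] V) : Prop :=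
  Orientation.map (Fin 8) f ((Pi.basisFun ℝ (Fin 8)).orientation) = o

/-- `f : ℝ⁸ → V` is an isometry for the standard inner product. -/
def IsometricEquiv (f : (Fin 8 → ℝ) ≃ₗ[ℝ] V) : Prop :=
  ∀ x y : Fin 8 → ℝ, ⟪f x, f y⟫ = ∑ i, x i * y i

/-- A four-form `Ω` on the oriented `8`-dimensional space `V` is *admissible* if some
orientation-preserving isomorphism `ℝ⁸ → V` pulls it back to the Cayley form `Ω₀`. -/
def AdmissibleForm (o : Orientation ℝ V (Fin 8)) (Ω : V [⋀^Fin 4]→ₗ[ℝ] ℝ) : Prop :=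
  ∃ f : (Fin 8 → ℝ) ≃ₗ[ℝ] V, OrientedEquiv o f ∧ Ω.compLinearMap f.toLinearMap = Omega0

/-- `Ω` is admissible and the inner product it induces is exactly the inner product of `V`. -/
def AdmissibleFormInducing (o : Orientation ℝ V (Fin 8)) (Ω : V [⋀^Fin 4]→ₗ[ℝ] ℝ) : Prop :=
  ∃ f : (Fin 8 → ℝ) ≃ₗ[ℝ] V, OrientedEquiv o f ∧ IsometricEquiv f ∧
    Ω.compLinearMap f.toLinearMap = Omega0

/-- The three-form `φ` on `V` (annihilating `v`) is, on the hyperplane `H` endowed with the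
orientation induced by `o` and `v`, a positive three-form whose associated inner product is the
restriction of the inner product of `V`; moreover `v` is a unit vector orthogonal to `H`. -/
def PositiveAdaptedInducing (o : Orientation ℝ V (Fin 8)) (φ : V [⋀^Fin 3]→ₗ[ℝ] ℝ)
    (v : V) (H : Submodule ℝ V) : Prop :=
  ∃ f : (Fin 8 → ℝ) ≃ₗ[ℝ] V, OrientedEquiv o f ∧ IsometricEquiv f ∧
    f (Pi.single 0 1) = v ∧ (∀ x : Fin 8 → ℝ, x 0 = 0 → f x ∈ H) ∧
    φ.compLinearMap f.toLinearMap = phi0ext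

/-- The one-form `v♭ = ⟪v,·⟫`. -/
def flatForm (v : V) : V [⋀^Fin 1]→ₗ[ℝ] ℝ :=
  AlternatingMap.ofSubsingleton ℝ V ℝ 0 (innerₗ V v)

/-- The inner product induced on `k`-forms on `V`, computed in an orthonormal basis. -/
def formInnerV (k : ℕ) (α β : V [⋀^Fin k]→ₗ[ℝ] ℝ) : ℝ :=
  (k.factorial : ℝ)⁻¹ *
    ∑ f : Fin k → Fin (Module.finrank ℝ V),
      α (fun j => stdOrthonormalBasis ℝ V (f j)) * β (fun j => stdOrthonormalBasis ℝ V (f j))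

/-- The volume form of `(V, ⟪·,·⟫, o)`. -/
def volV (o : Orientation ℝ V (Fin 8)) (hd : Module.finrank ℝ V = 8) :
    V [⋀^Fin 8]→ₗ[ℝ] ℝ :=
  letI : Fact (Module.finrank ℝ V = 8) := ⟨hd⟩
  o.volumeForm

/-- `ψ = ∗α` for `4`-forms on `V`, w.r.t. the inner product and orientation of `V`:
`γ ∧ ψ = ⟨γ, α⟩ vol` for every four-form `γ`. -/
def IsHodgeDualV (o : Orientation ℝ V (Fin 8)) (hd : Module.finrank ℝ V = 8)
    (α ψ : V [⋀^Fin 4]→ₗ[ℝ] ℝ) : Prop :=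
  ∀ γ : V [⋀^Fin 4]→ₗ[ℝ] ℝ, wedgeAM γ ψ = formInnerV 4 γ α • volV o hd

theorem dxs_apply_aux {n k : ℕ} (idx : Fin k → Fin n) (w : Fin k → Fin n → ℝ) :
    dxs idx w = ∑ σ : Equiv.Perm (Fin k),
      ((Equiv.Perm.sign σ : ℤ) : ℝ) * ∏ j, w j (idx (σ j)) := by
  have h : dxs idx w = Matrix.det (Matrix.of fun i j => w i (idx j)) := rfl
  rw [h, ← Matrix.det_transpose, Matrix.det_apply']
  rfl

theorem wedgeAM_compLinearMap_aux {V W : Type*} [AddCommGroup V] [Module ℝ V]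
    [AddCommGroup W] [Module ℝ W] {k l : ℕ}
    (α : V [⋀^Fin k]→ₗ[ℝ] ℝ) (β : V [⋀^Fin l]→ₗ[ℝ] ℝ) (f : W →ₗ[ℝ] V) :
    (wedgeAM α β).compLinearMap f = wedgeAM (α.compLinearMap f) (β.compLinearMap f) := by
  ext w
  simp only [wedgeAM, AlternatingMap.compLinearMap_apply, LinearMap.compAlternatingMap_apply,
    AlternatingMap.domDomCongr_apply, AlternatingMap.domCoprod_apply, sum_apply]
  congr 1
  refine Finset.sum_congr rfl fun σ _ => ?_
  induction σ using Quotient.inductionOn' with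
  | h σ => rfl

theorem wedgeAM_add_aux {V : Type*} [AddCommGroup V] [Module ℝ V] {k l : ℕ}
    (α : V [⋀^Fin k]→ₗ[ℝ] ℝ) (β β' : V [⋀^Fin l]→ₗ[ℝ] ℝ) :
    wedgeAM α (β + β') = wedgeAM α β + wedgeAM α β' := by
  ext w
  simp only [wedgeAM, ← AlternatingMap.domCoprod'_apply, TensorProduct.tmul_add, map_add]
  simp

theorem wedgeAM_sub_aux {V : Type*} [AddCommGroup V] [Module ℝ V] {k l : ℕ}
    (α : V [⋀^Fin k]→ₗ[ℝ] ℝ) (β β' : V [⋀^Fin l]→ₗ[ℝ] ℝ) :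
    wedgeAM α (β - β') = wedgeAM α β - wedgeAM α β' := by
  rw [eq_sub_iff_add_eq, ← wedgeAM_add_aux, sub_add_cancel]

/-- The (non-alternated) product of coordinates. -/
def prodCoords {n k : ℕ} (idx : Fin k → Fin n) :
    MultilinearMap ℝ (fun _ : Fin k => (Fin n → ℝ)) ℝ :=
  (MultilinearMap.mkPiAlgebra ℝ (Fin k) ℝ).compLinearMap fun j => LinearMap.proj (idx j)

theorem dxs_eq_alternatization {n k : ℕ} (idx : Fin k → Fin n) :
    dxs idx = MultilinearMap.alternatization (prodCoords idx) := by
  ext w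
  have h : dxs idx w = Matrix.det (Matrix.of fun i j => w i (idx j)) := rfl
  rw [h, Matrix.det_apply, MultilinearMap.alternatization_apply]
  rfl

theorem wedgeAM_dxs_aux {n k l : ℕ} (I : Fin k → Fin n) (J : Fin l → Fin n) :
    wedgeAM (dxs I) (dxs J) = dxs (Fin.append I J) := by
  ext w
  rw [dxs_eq_alternatization I, dxs_eq_alternatization J, wedgeAM,
    ← MultilinearMap.domCoprod_alternization, dxs_apply_aux]
  simp only [LinearMap.compAlternatingMap_apply,
    AlternatingMap.domDomCongr_apply, MultilinearMap.alternatization_apply, map_sum]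
  rw [← Equiv.sum_comp (finSumFinEquiv (m := k) (n := l)).permCongr]
  rw [← Equiv.sum_comp (Equiv.inv (Equiv.Perm (Fin k ⊕ Fin l)))]
  refine Finset.sum_congr rfl fun σ _ => ?_
  rw [Equiv.Perm.sign_permCongr]
  have : ∏ j, w j (Fin.append I J ((finSumFinEquiv.permCongr σ) j))
      = ∏ x : Fin k ⊕ Fin l, w (finSumFinEquiv (σ⁻¹ x)) (Fin.append I J (finSumFinEquiv x)) := by
    rw [← Equiv.prod_comp (finSumFinEquiv (m := k) (n := l)), ← Equiv.prod_comp σ⁻¹]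
    refine Finset.prod_congr rfl fun x _ => ?_
    simp
  rw [this, Fintype.prod_sum_type]
  simp only [finSumFinEquiv_apply_left (m := k) (n := l),
    finSumFinEquiv_apply_right (m := k) (n := l), Fin.append_left, Fin.append_right]
  simp [prodCoords, MultilinearMap.domDomCongr_apply, MultilinearMap.domCoprod_apply,
    Units.smul_def]
  rw [← zsmul_eq_mul, map_zsmul]
  simp

theorem symm_coord_aux (f : (Fin 8 → ℝ) ≃ₗ[ℝ] V) (hf : IsometricEquiv f) (w : V) (i : Fin 8) :
    f.symm w i = ⟪f (Pi.single i 1), w⟫ := by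
  obtain ⟨x, rfl⟩ := f.surjective w
  rw [hf]
  simp [Pi.single_apply]

/-- The inner product with a basic form is evaluation. -/
theorem formInner_dxs_aux {k : ℕ} (f : (Fin 8 → ℝ) ≃ₗ[ℝ] V) (hf : IsometricEquiv f)
    (γ : V [⋀^Fin k]→ₗ[ℝ] ℝ) (I : Fin k → Fin 8) :
    formInnerV k γ ((dxs I).compLinearMap f.symm.toLinearMap)
      = γ fun j => f (Pi.single (I j) 1) := by
  set b := stdOrthonormalBasis ℝ V with hb
  have key : ∀ σ : Equiv.Perm (Fin k),
      ∑ g : Fin k → Fin (Module.finrank ℝ V),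
        γ (fun j => b (g j)) * ∏ j, ⟪f (Pi.single (I (σ j)) 1), b (g j)⟫
      = ((Equiv.Perm.sign σ : ℤ) : ℝ) * γ fun j => f (Pi.single (I j) 1) := by
    intro σ
    have h1 : γ (fun j => f (Pi.single (I (σ j)) 1))
        = ((Equiv.Perm.sign σ : ℤ) : ℝ) * γ fun j => f (Pi.single (I j) 1) := by
      have := γ.map_perm (fun j => f (Pi.single (I j) 1)) σ
      rw [Units.smul_def, zsmul_eq_mul] at this
      exact this
    rw [← h1]
    have h2 : (fun j => f (Pi.single (I (σ j)) 1))
        = fun j => ∑ i, ⟪f (Pi.single (I (σ j)) 1), b i⟫ • b i := by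
      funext j
      conv_lhs => rw [← b.sum_repr' (f (Pi.single (I (σ j)) 1))]
      exact Finset.sum_congr rfl fun i _ => by rw [real_inner_comm]
    conv_rhs => rw [h2]
    rw [← AlternatingMap.coe_multilinearMap, MultilinearMap.map_sum]
    refine Finset.sum_congr rfl fun g _ => ?_
    rw [MultilinearMap.map_smul_univ, smul_eq_mul, mul_comm]
  unfold formInnerV
  simp only [AlternatingMap.compLinearMap_apply, dxs_apply_aux, LinearEquiv.coe_coe,
    symm_coord_aux f hf, Finset.mul_sum]
  rw [Finset.sum_comm]
  have h3 : ∀ σ : Equiv.Perm (Fin k), ∑ g : Fin k → Fin (Module.finrank ℝ V),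
      (k.factorial : ℝ)⁻¹ * (γ (fun j => b (g j)) * (((Equiv.Perm.sign σ : ℤ) : ℝ) *
        ∏ j, ⟪f (Pi.single (I (σ j)) 1), b (g j)⟫))
      = (k.factorial : ℝ)⁻¹ * γ fun j => f (Pi.single (I j) 1) := by
    intro σ
    have hs : ((Equiv.Perm.sign σ : ℤ) : ℝ) * ((Equiv.Perm.sign σ : ℤ) : ℝ) = 1 := by
      rcases Int.units_eq_one_or (Equiv.Perm.sign σ) with h | h <;> simp [h]
    calc _ = (k.factorial : ℝ)⁻¹ * ((Equiv.Perm.sign σ : ℤ) : ℝ) *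
          ∑ g : Fin k → Fin (Module.finrank ℝ V),
            γ (fun j => b (g j)) * ∏ j, ⟪f (Pi.single (I (σ j)) 1), b (g j)⟫ := by
          rw [Finset.mul_sum]
          exact Finset.sum_congr rfl fun g _ => by ring
      _ = _ := by
          rw [key, mul_assoc, ← mul_assoc (((Equiv.Perm.sign σ : ℤ) : ℝ)), hs, one_mul]
  rw [Finset.sum_congr rfl fun σ _ => h3 σ, Finset.sum_const, Finset.card_univ,
    Fintype.card_perm, Fintype.card_fin, nsmul_eq_mul, ← mul_assoc, mul_inv_cancel₀, one_mul]
  exact_mod_cast k.factorial_ne_zero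

theorem wedge_eval_aux {k l n : ℕ} (f : (Fin n → ℝ) ≃ₗ[ℝ] V) (γ : V [⋀^Fin k]→ₗ[ℝ] ℝ)
    (I : Fin k → Fin n) (J : Fin l → Fin n) (hinj : Function.Injective (Fin.append I J)) :
    wedgeAM γ ((dxs J).compLinearMap f.symm.toLinearMap)
      (fun j => f (Pi.single (Fin.append I J j) 1)) = γ fun j => f (Pi.single (I j) 1) := by
  have hJ : Function.Injective J := fun a b h => by
    have := @hinj (Fin.natAdd k a) (Fin.natAdd k b) (by simpa using h)
    simpa using this
  have hIJ : ∀ a b, I a ≠ J b := fun a b h => by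
    have := @hinj (Fin.castAdd l a) (Fin.natAdd k b) (by
      rw [Fin.append_left, Fin.append_right]; exact h)
    have := congrArg Fin.val this
    simp at this
    omega
  simp only [wedgeAM, LinearMap.compAlternatingMap_apply,
    AlternatingMap.domDomCongr_apply, AlternatingMap.domCoprod_apply, sum_apply,
    map_sum]
  refine (Finset.sum_eq_single
    (Quotient.mk'' (1 : Equiv.Perm (Fin k ⊕ Fin l)) : Equiv.Perm.ModSumCongr (Fin k) (Fin l))
    ?_ ?_).trans ?_
  rotate_left 2
  · rw [AlternatingMap.domCoprod.summand_mk'']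
    have hd : dxs J (fun j => Pi.single (J j) 1) = 1 := by
      have h : dxs J (fun j => Pi.single (J j) (1 : ℝ))
          = Matrix.det (1 : Matrix (Fin l) (Fin l) ℝ) := by
        change Matrix.det (Matrix.of fun i j => (Pi.single (J i) (1 : ℝ) : Fin n → ℝ) (J j)) = _
        congr 1
        ext i j
        simp [Pi.single_apply, Matrix.one_apply, hJ.eq_iff, eq_comm]
      rw [h, Matrix.det_one]
    have e1 : ∀ i : Fin k, Fin.append I J (finSumFinEquiv (Sum.inl i)) = I i := fun i => by
      rw [finSumFinEquiv_apply_left, Fin.append_left]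
    have e2 : ∀ i : Fin l, Fin.append I J (finSumFinEquiv (Sum.inr i)) = J i := fun i => by
      rw [finSumFinEquiv_apply_right, Fin.append_right]
    simp [MultilinearMap.domDomCongr_apply, MultilinearMap.domCoprod_apply, Function.comp_def,
      -finSumFinEquiv_apply_left, -finSumFinEquiv_apply_right, e1, e2, hd]
  · intro q _ hq
    induction q using Quotient.inductionOn' with
    | h σ =>
    rw [AlternatingMap.domCoprod.summand_mk'']
    have hex : ∃ j : Fin l, ∃ i : Fin k, σ (Sum.inr j) = Sum.inl i := by
      by_contra hcon
      push Not at hcon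
      apply hq
      have hm : Set.MapsTo σ (Set.range Sum.inr) (Set.range Sum.inr) := by
        rintro _ ⟨j, rfl⟩
        rcases h : σ (Sum.inr j) with i | i
        · exact absurd h (hcon j i)
        · exact ⟨i, rfl⟩
      have hr : σ ∈ (Equiv.Perm.sumCongrHom (Fin k) (Fin l)).range :=
        Equiv.Perm.mem_sumCongrHom_range_of_perm_mapsTo_inl
          ((Equiv.Perm.perm_mapsTo_inl_iff_mapsTo_inr σ).2 hm)
      apply Quotient.sound'
      rw [QuotientGroup.leftRel_apply]
      rw [mul_one]
      exact Subgroup.inv_mem _ hr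
    obtain ⟨j, i, hji⟩ := hex
    have hd : dxs J (fun a => Pi.single (Fin.append I J (finSumFinEquiv (σ (Sum.inr a)))) 1)
        = 0 := by
      change Matrix.det (Matrix.of fun a c =>
        (Pi.single (Fin.append I J (finSumFinEquiv (σ (Sum.inr a)))) (1 : ℝ) : Fin n → ℝ) (J c)) = 0
      apply Matrix.det_eq_zero_of_row_eq_zero j
      intro c
      rw [Matrix.of_apply, hji, finSumFinEquiv_apply_left, Fin.append_left]
      exact Pi.single_eq_of_ne (hIJ i c).symm _
    simp [MultilinearMap.domDomCongr_apply, MultilinearMap.domCoprod_apply, Function.comp_def,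
      -finSumFinEquiv_apply_left, -finSumFinEquiv_apply_right, hd]
  · intro h
    exact absurd (Finset.mem_univ _) h

theorem hodge_dxs_aux (o : Orientation ℝ V (Fin 8)) (hd : Module.finrank ℝ V = 8)
    (f : (Fin 8 → ℝ) ≃ₗ[ℝ] V) (ho : OrientedEquiv o f) (hf : IsometricEquiv f)
    (I J : Fin 4 → Fin 8) (s : Equiv.Perm (Fin 8)) (hs : Fin.append I J = s)
    (hsign : Equiv.Perm.sign s = 1) :
    IsHodgeDualV o hd ((dxs I).compLinearMap f.symm.toLinearMap)
      ((dxs J).compLinearMap f.symm.toLinearMap) := by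
  intro γ
  rw [formInner_dxs_aux f hf]
  set b : Module.Basis (Fin 8) ℝ V := (Pi.basisFun ℝ (Fin 8)).map f with hb
  have hbi : ∀ i, b i = f (Pi.single i 1) := fun i => by simp [hb]
  have hon : Orthonormal ℝ b := by
    rw [orthonormal_iff_ite]
    intro i j
    rw [hbi, hbi, hf]
    simp [Pi.single_apply, eq_comm]
  have hvol : volV o hd = b.det := by
    unfold volV
    letI : Fact (Module.finrank ℝ V = 8) := ⟨hd⟩
    have := o.volumeForm_robust (b.toOrthonormalBasis hon) (by
      rw [Module.Basis.toBasis_toOrthonormalBasis, hb, Module.Basis.orientation_map]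
      exact ho)
    rw [Module.Basis.toBasis_toOrthonormalBasis] at this
    exact this
  rw [hvol]
  refine (AlternatingMap.eq_smul_basis_det b _).trans ?_
  refine congrArg (fun c : ℝ => c • b.det) ?_
  rw [← wedge_eval_aux f γ I J (hs ▸ s.injective)]
  have := (wedgeAM γ ((dxs J).compLinearMap f.symm.toLinearMap)).map_perm b s
  rw [hsign, one_smul] at this
  rw [← this]
  have hfun : (b ∘ s : Fin 8 → V) = fun j => f (Pi.single (Fin.append I J j) 1) := by
    funext j
    rw [hs, Function.comp_apply, hbi]
  rw [hfun]

theorem formInnerV_add_aux (k : ℕ) (γ α α' : V [⋀^Fin k]→ₗ[ℝ] ℝ) :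
    formInnerV k γ (α + α') = formInnerV k γ α + formInnerV k γ α' := by
  simp [formInnerV, mul_add, Finset.sum_add_distrib]

theorem hodge_add_aux (o : Orientation ℝ V (Fin 8)) (hd : Module.finrank ℝ V = 8)
    {α ψ α' ψ' : V [⋀^Fin 4]→ₗ[ℝ] ℝ} (h : IsHodgeDualV o hd α ψ) (h' : IsHodgeDualV o hd α' ψ') :
    IsHodgeDualV o hd (α + α') (ψ + ψ') := by
  intro γ
  rw [wedgeAM_add_aux, h, h', formInnerV_add_aux, add_smul]

theorem hodge_sub_aux (o : Orientation ℝ V (Fin 8)) (hd : Module.finrank ℝ V = 8)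
    {α ψ α' ψ' : V [⋀^Fin 4]→ₗ[ℝ] ℝ} (h : IsHodgeDualV o hd α ψ) (h' : IsHodgeDualV o hd α' ψ') :
    IsHodgeDualV o hd (α - α') (ψ - ψ') := by
  intro γ
  rw [wedgeAM_sub_aux, h, h']
  refine (sub_smul _ _ _).symm.trans ?_
  refine congrArg (fun c : ℝ => c • volV o hd) ?_
  rw [sub_eq_iff_eq_add, ← formInnerV_add_aux, sub_add_cancel]

/-- The four-form `e₁ ∧ φ₀`. -/
def alpha0 : (Fin 8 → ℝ) [⋀^Fin 4]→ₗ[ℝ] ℝ :=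
  dxs ![0,1,2,3] + dxs ![0,1,4,5] + dxs ![0,1,6,7] + dxs ![0,2,4,6]
    - dxs ![0,2,5,7] - dxs ![0,3,4,7] - dxs ![0,3,5,6]

/-- Its Hodge dual. -/
def psi0 : (Fin 8 → ℝ) [⋀^Fin 4]→ₗ[ℝ] ℝ :=
  dxs ![4,5,6,7] + dxs ![2,3,6,7] + dxs ![2,3,4,5] + dxs ![1,3,5,7]
    - dxs ![1,3,4,6] - dxs ![1,2,5,6] - dxs ![1,2,4,7]

theorem alpha0_add_psi0 : alpha0 + psi0 = Omega0 := by
  unfold alpha0 psi0 Omega0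
  abel

theorem wedge_phi0ext : wedgeAM (dxs ![0]) phi0ext = alpha0 := by
  have h : ∀ a b c : Fin 8, wedgeAM (dxs ![0]) (dxs ![a,b,c]) = dxs ![0,a,b,c] := by
    intro a b c
    rw [wedgeAM_dxs_aux]
    congr 1
    funext i
    fin_cases i <;> rfl
  unfold phi0ext alpha0
  simp only [wedgeAM_add_aux, wedgeAM_sub_aux]
  simp only [h]

theorem hodge_alpha0 (o : Orientation ℝ V (Fin 8)) (hd : Module.finrank ℝ V = 8)
    (f : (Fin 8 → ℝ) ≃ₗ[ℝ] V) (ho : OrientedEquiv o f) (hf : IsometricEquiv f) :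
    IsHodgeDualV o hd (alpha0.compLinearMap f.symm.toLinearMap)
      (psi0.compLinearMap f.symm.toLinearMap) := by
  have hsub : ∀ p q : (Fin 8 → ℝ) [⋀^Fin 4]→ₗ[ℝ] ℝ, (p - q).compLinearMap f.symm.toLinearMap
      = p.compLinearMap f.symm.toLinearMap - q.compLinearMap f.symm.toLinearMap :=
    fun p q => by ext; simp
  unfold alpha0 psi0
  simp only [hsub, AlternatingMap.add_compLinearMap]
  have key := hodge_dxs_aux o hd f ho hf
  refine hodge_sub_aux o hd (hodge_sub_aux o hd (hodge_sub_aux o hd (hodge_add_aux o hd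
    (hodge_add_aux o hd (hodge_add_aux o hd ?_ ?_) ?_) ?_) ?_) ?_) ?_
  · exact key _ _ ⟨![0,1,2,3,4,5,6,7], ![0,1,2,3,4,5,6,7], by decide, by decide⟩
      (by decide) (by decide +kernel)
  · exact key _ _ ⟨![0,1,4,5,2,3,6,7], ![0,1,4,5,2,3,6,7], by decide, by decide⟩
      (by decide) (by decide +kernel)
  · exact key _ _ ⟨![0,1,6,7,2,3,4,5], ![0,1,4,5,6,7,2,3], by decide, by decide⟩
      (by decide) (by decide +kernel)
  · exact key _ _ ⟨![0,2,4,6,1,3,5,7], ![0,4,1,5,2,6,3,7], by decide, by decide⟩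
      (by decide) (by decide +kernel)
  · exact key _ _ ⟨![0,2,5,7,1,3,4,6], ![0,4,1,5,6,2,7,3], by decide, by decide⟩
      (by decide) (by decide +kernel)
  · exact key _ _ ⟨![0,3,4,7,1,2,5,6], ![0,4,5,1,2,6,7,3], by decide, by decide⟩
      (by decide) (by decide +kernel)
  · exact key _ _ ⟨![0,3,5,6,1,2,4,7], ![0,4,5,1,6,2,3,7], by decide, by decide⟩
      (by decide) (by decide +kernel)

/-- Let `V` be an 8-dimensional oriented inner product space (its inner product
playing the role of `g`), `H` a 7-dimensional subspace, `v` a unit vector orthogonal to `H`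
inducing the orientation of `H`, and `φ` a positive three-form on `H` (extended to `V`
annihilating `v`) whose associated inner product is the restriction of that of `V`. Then
`Ω = v♭ ∧ φ + ∗(v♭ ∧ φ)` is an admissible four-form on `V` and the inner product induced by `Ω`
is exactly `g`. -/
theorem admissible_of_positive_hyperplane
    (o : Orientation ℝ V (Fin 8)) (hd : Module.finrank ℝ V = 8)
    (v : V) (H : Submodule ℝ V) (hH : Module.finrank ℝ H = 7)
    (hv : ⟪v, v⟫ = 1) (hvH : ∀ h ∈ H, ⟪v, h⟫ = 0)
    (φ : V [⋀^Fin 3]→ₗ[ℝ] ℝ) (hφ : PositiveAdaptedInducing o φ v H) :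
    ∃ ψ : V [⋀^Fin 4]→ₗ[ℝ] ℝ,
      IsHodgeDualV o hd (wedgeAM (flatForm v) φ) ψ ∧
      AdmissibleFormInducing o (wedgeAM (flatForm v) φ + ψ) := by
  obtain ⟨f, ho, hf, hfv, -, hφf⟩ := hφ
  have hback : ∀ {k : ℕ} (β : V [⋀^Fin k]→ₗ[ℝ] ℝ),
      (β.compLinearMap f.toLinearMap).compLinearMap f.symm.toLinearMap = β := fun β => by
    ext w
    simp [Function.comp_def]
  have hfwd : ∀ {k : ℕ} (β : (Fin 8 → ℝ) [⋀^Fin k]→ₗ[ℝ] ℝ),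
      (β.compLinearMap f.symm.toLinearMap).compLinearMap f.toLinearMap = β := fun β => by
    ext w
    simp [Function.comp_def]
  have hflat : (flatForm v).compLinearMap f.toLinearMap = dxs ![0] := by
    ext w
    rw [dxs_apply_aux, ← hfv]
    have h := symm_coord_aux f hf (f (w 0)) 0
    rw [f.symm_apply_apply] at h
    simp [flatForm, h]
  have hα : (wedgeAM (flatForm v) φ).compLinearMap f.toLinearMap = alpha0 := by
    rw [wedgeAM_compLinearMap_aux, hflat, hφf, wedge_phi0ext]
  refine ⟨psi0.compLinearMap f.symm.toLinearMap, ?_, f, ho, hf, ?_⟩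
  · have := hodge_alpha0 o hd f ho hf
    rw [← hα, hback] at this
    exact this
  · rw [AlternatingMap.add_compLinearMap]
    refine Eq.trans ?_ alpha0_add_psi0
    congr 1
    exact hfwd psi0

end
end

section
/- The subgroup Spin(7) ⊂ SO(8), realized as the stabilizer of the Cayley four-form Ω₀, acts transitively on the unit sphere S⁷ ⊂ ℝ⁸. -/
noncomputable section

open scoped BigOperators

/-- Left multiplication by the imaginary octonion `e`. -/
def octFun (e : Fin 7 → ℝ) (v : Fin 8 → ℝ) : Fin 8 → ℝ :=
  ![-e 0 * v 1 - e 1 * v 2 - e 2 * v 3 - e 3 * v 4 - e 4 * v 5 - e 5 * v 6 - e 6 * v 7,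
    e 0 * v 0 - e 2 * v 2 + e 1 * v 3 - e 4 * v 4 + e 3 * v 5 - e 6 * v 6 + e 5 * v 7,
    e 1 * v 0 + e 2 * v 1 - e 0 * v 3 - e 5 * v 4 + e 6 * v 5 + e 3 * v 6 - e 4 * v 7,
    e 2 * v 0 - e 1 * v 1 + e 0 * v 2 + e 6 * v 4 + e 5 * v 5 - e 4 * v 6 - e 3 * v 7,
    e 3 * v 0 + e 4 * v 1 + e 5 * v 2 - e 6 * v 3 - e 0 * v 5 - e 1 * v 6 + e 2 * v 7,
    e 4 * v 0 - e 3 * v 1 - e 6 * v 2 - e 5 * v 3 + e 0 * v 4 + e 2 * v 6 + e 1 * v 7,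
    e 5 * v 0 + e 6 * v 1 - e 3 * v 2 + e 4 * v 3 + e 1 * v 4 - e 2 * v 5 - e 0 * v 7,
    e 6 * v 0 - e 5 * v 1 + e 4 * v 2 + e 3 * v 3 - e 2 * v 4 - e 1 * v 5 + e 0 * v 6]

/-- The imaginary octonion carrying `x` to `y` when `x ⊥ y` are unit vectors. -/
def octQuot (x y : Fin 8 → ℝ) : Fin 7 → ℝ :=
  ![-y 0 * x 1 + y 1 * x 0 - y 2 * x 3 + y 3 * x 2 - y 4 * x 5 + y 5 * x 4 - y 6 * x 7 + y 7 * x 6,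
    -y 0 * x 2 + y 1 * x 3 + y 2 * x 0 - y 3 * x 1 - y 4 * x 6 + y 5 * x 7 + y 6 * x 4 - y 7 * x 5,
    -y 0 * x 3 - y 1 * x 2 + y 2 * x 1 + y 3 * x 0 + y 4 * x 7 + y 5 * x 6 - y 6 * x 5 - y 7 * x 4,
    -y 0 * x 4 + y 1 * x 5 + y 2 * x 6 - y 3 * x 7 + y 4 * x 0 - y 5 * x 1 - y 6 * x 2 + y 7 * x 3,
    -y 0 * x 5 - y 1 * x 4 - y 2 * x 7 - y 3 * x 6 + y 4 * x 1 + y 5 * x 0 + y 6 * x 3 + y 7 * x 2,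
    -y 0 * x 6 + y 1 * x 7 - y 2 * x 4 + y 3 * x 5 + y 4 * x 2 - y 5 * x 3 + y 6 * x 0 - y 7 * x 1,
    -y 0 * x 7 - y 1 * x 6 + y 2 * x 5 + y 3 * x 4 - y 4 * x 3 - y 5 * x 2 + y 6 * x 1 + y 7 * x 0]

def nsq (e : Fin 7 → ℝ) : ℝ :=
  e 0 ^ 2 + e 1 ^ 2 + e 2 ^ 2 + e 3 ^ 2 + e 4 ^ 2 + e 5 ^ 2 + e 6 ^ 2

def octLin (e : Fin 7 → ℝ) : (Fin 8 → ℝ) →ₗ[ℝ] (Fin 8 → ℝ) where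
  toFun := octFun e
  map_add' u v := by
    ext i; fin_cases i <;> simp [octFun] <;> ring
  map_smul' c v := by
    ext i; fin_cases i <;> simp [octFun] <;> ring

theorem octFun_sq (e : Fin 7 → ℝ) (v : Fin 8 → ℝ) : octFun e (octFun e v) = -nsq e • v := by
  ext i; fin_cases i <;> simp [octFun, nsq] <;> ring

theorem octFun_inner (e : Fin 7 → ℝ) (u w : Fin 8 → ℝ) :
    (∑ i, octFun e u i * octFun e w i) = nsq e * ∑ i, u i * w i := by
  simp [octFun, nsq, Fin.sum_univ_succ]; ring

theorem octQuot_apply (x y : Fin 8 → ℝ) :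
    octFun (octQuot x y) x = (∑ i, x i * x i) • y - (∑ i, x i * y i) • x := by
  ext i; fin_cases i <;> simp [octFun, octQuot, Fin.sum_univ_succ] <;> ring

theorem octQuot_nsq (x y : Fin 8 → ℝ) :
    nsq (octQuot x y) = (∑ i, x i * x i) * (∑ i, y i * y i) - (∑ i, x i * y i) ^ 2 := by
  simp [nsq, octQuot, Fin.sum_univ_succ]; ring

/-- Determinant of the four selected coordinates, by Laplace expansion along two rows. -/
def det4 (a b c d : Fin 8 → ℝ) (i j k l : Fin 8) : ℝ :=
  (a i * b j - a j * b i) * (c k * d l - c l * d k)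
  - (a i * b k - a k * b i) * (c j * d l - c l * d j)
  + (a i * b l - a l * b i) * (c j * d k - c k * d j)
  + (a j * b k - a k * b j) * (c i * d l - c l * d i)
  - (a j * b l - a l * b j) * (c i * d k - c k * d i)
  + (a k * b l - a l * b k) * (c i * d j - c j * d i)

theorem dxs_eq (i j k l : Fin 8) (v : Fin 4 → Fin 8 → ℝ) :
    dxs ![i, j, k, l] v = det4 (v 0) (v 1) (v 2) (v 3) i j k l := by
  have h : dxs ![i, j, k, l] v
      = Matrix.det (Matrix.of fun a b => v a (![i, j, k, l] b)) := rfl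
  rw [h, Matrix.det_succ_row_zero]
  simp [Fin.sum_univ_succ, Matrix.det_fin_three, det4, Fin.succAbove]
  ring

def omegaPoly (a b c d : Fin 8 → ℝ) : ℝ :=
  det4 a b c d 0 1 2 3 + det4 a b c d 0 1 4 5 + det4 a b c d 0 1 6 7 + det4 a b c d 0 2 4 6
    - det4 a b c d 0 2 5 7 - det4 a b c d 0 3 4 7 - det4 a b c d 0 3 5 6 - det4 a b c d 1 2 4 7
    - det4 a b c d 1 2 5 6 - det4 a b c d 1 3 4 6 + det4 a b c d 1 3 5 7 + det4 a b c d 2 3 4 5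
    + det4 a b c d 2 3 6 7 + det4 a b c d 4 5 6 7

theorem Omega0_eq (v : Fin 4 → Fin 8 → ℝ) :
    Omega0 v = omegaPoly (v 0) (v 1) (v 2) (v 3) := by
  simp only [Omega0, AlternatingMap.add_apply, AlternatingMap.sub_apply, dxs_eq, omegaPoly]

/-- The standard basis vectors. -/
def bas : Fin 8 → Fin 8 → ℝ :=
  ![![1,0,0,0,0,0,0,0], ![0,1,0,0,0,0,0,0], ![0,0,1,0,0,0,0,0], ![0,0,0,1,0,0,0,0],
    ![0,0,0,0,1,0,0,0], ![0,0,0,0,0,1,0,0], ![0,0,0,0,0,0,1,0], ![0,0,0,0,0,0,0,1]]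

/-- The images of the standard basis vectors. -/
def octCol (e : Fin 7 → ℝ) : Fin 8 → Fin 8 → ℝ :=
  ![![0, e 0, e 1, e 2, e 3, e 4, e 5, e 6], ![-e 0, 0, e 2, -e 1, e 4, -e 3, e 6, -e 5],
    ![-e 1, -e 2, 0, e 0, e 5, -e 6, -e 3, e 4], ![-e 2, e 1, -e 0, 0, -e 6, -e 5, e 4, e 3],
    ![-e 3, -e 4, -e 5, e 6, 0, e 0, e 1, -e 2], ![-e 4, e 3, e 6, e 5, -e 0, 0, -e 2, -e 1],
    ![-e 5, -e 6, e 3, -e 4, -e 1, e 2, 0, e 0], ![-e 6, e 5, -e 4, -e 3, e 2, e 1, -e 0, 0]]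

theorem bas_eq (i : Fin 8) : Pi.single i (1 : ℝ) = bas i := by
  ext j; fin_cases i <;> fin_cases j <;> simp [bas, Pi.single_apply]

theorem octCol_eq (e : Fin 7 → ℝ) (i : Fin 8) : octFun e (bas i) = octCol e i := by
  ext j; fin_cases i <;> fin_cases j <;> simp [bas, octFun, octCol]

set_option maxHeartbeats 4000000 in
theorem omega_cols (e : Fin 7 → ℝ) (i j k l : Fin 8) (hij : i < j) (hjk : j < k) (hkl : k < l) :
    omegaPoly (octCol e i) (octCol e j) (octCol e k) (octCol e l)
      = nsq e ^ 2 * omegaPoly (bas i) (bas j) (bas k) (bas l) := by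
  fin_cases i <;> fin_cases j <;> first | (exfalso; revert hij; decide) | skip
  all_goals fin_cases k <;> first | (exfalso; revert hjk; decide) | skip
  all_goals fin_cases l <;> first | (exfalso; revert hkl; decide) | skip
  all_goals
    clear hij hjk hkl
    simp [omegaPoly, det4, octCol, bas, nsq]
    try ring

theorem alt_ext {f g : (Fin 8 → ℝ) [⋀^Fin 4]→ₗ[ℝ] ℝ}
    (h : ∀ v : Fin 4 → Fin 8, StrictMono v →
      f (fun a => Pi.single (v a) 1) = g (fun a => Pi.single (v a) 1)) : f = g := by
  refine Module.Basis.ext_alternating (Pi.basisFun ℝ (Fin 8)) fun v hv => ?_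
  simp only [Pi.basisFun_apply]
  have hs : StrictMono (v ∘ Tuple.sort v) :=
    (Tuple.monotone_sort v).strictMono_of_injective (hv.comp (Equiv.injective _))
  have h1 := h _ hs
  have hf := f.map_perm (fun a => Pi.single (v a) (1 : ℝ)) (Tuple.sort v)
  have hg := g.map_perm (fun a => Pi.single (v a) (1 : ℝ)) (Tuple.sort v)
  have h2 := hf.symm.trans (Eq.trans h1 hg)
  exact smul_left_cancel _ h2

theorem octLin_omega (e : Fin 7 → ℝ) (he : nsq e = 1) :
    Omega0.compLinearMap (octLin e) = Omega0 := by
  refine alt_ext fun v hv => ?_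
  have key := omega_cols e (v 0) (v 1) (v 2) (v 3) (hv (by decide)) (hv (by decide))
    (hv (by decide))
  rw [he] at key
  simp only [AlternatingMap.compLinearMap_apply, Omega0_eq, bas_eq]
  simpa [octLin, octCol_eq] using key

def octEquiv (e : Fin 7 → ℝ) (he : nsq e = 1) : (Fin 8 → ℝ) ≃ₗ[ℝ] (Fin 8 → ℝ) :=
  LinearEquiv.ofLinear (octLin e) (-octLin e)
    (by
      refine LinearMap.ext fun v => ?_
      have := octFun_sq e v
      rw [he] at this
      simp [octLin] at this ⊢
      simp [this])
    (by
      refine LinearMap.ext fun v => ?_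
      have := octFun_sq e v
      rw [he] at this
      simp [octLin] at this ⊢
      simp [this])

theorem orth_case (x y : Fin 8 → ℝ) (hx : (∑ i, x i * x i) = 1) (hy : (∑ i, y i * y i) = 1)
    (hxy : (∑ i, x i * y i) = 0) :
    ∃ A : (Fin 8 → ℝ) ≃ₗ[ℝ] (Fin 8 → ℝ),
        Omega0.compLinearMap A.toLinearMap = Omega0 ∧
        (∀ u w : Fin 8 → ℝ, (∑ i, A u i * A w i) = ∑ i, u i * w i) ∧
        A x = y := by
  have he : nsq (octQuot x y) = 1 := by rw [octQuot_nsq, hx, hy, hxy]; norm_num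
  refine ⟨octEquiv _ he, octLin_omega _ he, fun u w => ?_, ?_⟩
  · exact (octFun_inner _ u w).trans (by rw [he, one_mul])
  · exact (octQuot_apply x y).trans (by rw [hx, hxy]; simp)

theorem exists_orth (x y : Fin 8 → ℝ) : ∃ z : Fin 8 → ℝ, (∑ i, z i * z i) = 1 ∧
    (∑ i, x i * z i) = 0 ∧ (∑ i, z i * y i) = 0 := by
  have hk : LinearMap.ker (Matrix.mulVecLin (Matrix.of ![x, y])) ≠ ⊥ :=
    LinearMap.ker_ne_bot_of_finrank_lt (by simp)
  obtain ⟨w, hw, hw0⟩ := (Submodule.ne_bot_iff _).1 hk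
  have hw' : Matrix.mulVec (Matrix.of ![x, y]) w = 0 := hw
  have h0 : ∑ i, x i * w i = 0 := congrFun hw' 0
  have h1 : ∑ i, y i * w i = 0 := congrFun hw' 1
  have hp : 0 < ∑ i, w i * w i := by
    obtain ⟨i, hi⟩ := Function.ne_iff.1 hw0
    exact Finset.sum_pos' (fun i _ => mul_self_nonneg _)
      ⟨i, Finset.mem_univ _, mul_self_pos.2 hi⟩
  set s := ∑ i, w i * w i with hs
  refine ⟨fun i => (√s)⁻¹ * w i, ?_, ?_, ?_⟩
  · have : ∀ i, (√s)⁻¹ * w i * ((√s)⁻¹ * w i) = (√s * √s)⁻¹ * (w i * w i) := by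
      intro i; rw [mul_inv]; ring
    simp only [this, ← Finset.mul_sum, ← hs, Real.mul_self_sqrt hp.le]
    exact inv_mul_cancel₀ hp.ne'
  · have : ∀ i, x i * ((√s)⁻¹ * w i) = (√s)⁻¹ * (x i * w i) := by intro i; ring
    simp only [this, ← Finset.mul_sum, h0, mul_zero]
  · have : ∀ i, (√s)⁻¹ * w i * y i = (√s)⁻¹ * (y i * w i) := by intro i; ring
    simp only [this, ← Finset.mul_sum, h1, mul_zero]

/-- The subgroup `Spin(7) ⊂ SO(8)`, realized as the stabilizer of the Cayley
four-form `Ω₀` in `GL(8,ℝ)`, acts transitively on the unit sphere `S⁷ ⊂ ℝ⁸`: any unit vector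
can be mapped to any other by a linear automorphism preserving `Ω₀` (such automorphisms
automatically preserve the Euclidean inner product). -/
theorem spin7_transitive_on_sphere :
    ∀ x y : Fin 8 → ℝ, (∑ i, x i * x i) = 1 → (∑ i, y i * y i) = 1 →
      ∃ A : (Fin 8 → ℝ) ≃ₗ[ℝ] (Fin 8 → ℝ),
        Omega0.compLinearMap A.toLinearMap = Omega0 ∧
        (∀ u w : Fin 8 → ℝ, (∑ i, A u i * A w i) = ∑ i, u i * w i) ∧
        A x = y := by
  intro x y hx hy
  obtain ⟨z, hz, hxz, hzy⟩ := exists_orth x y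
  obtain ⟨A, hA, hA', hAx⟩ := orth_case x z hx hz hxz
  obtain ⟨B, hB, hB', hBz⟩ := orth_case z y hz hy hzy
  refine ⟨A.trans B, ?_, fun u w => ?_, ?_⟩
  · refine AlternatingMap.ext fun v => ?_
    have h1 := DFunLike.congr_fun hA v
    have h2 := DFunLike.congr_fun hB (fun a => A (v a))
    exact h2.trans h1
  · exact (hB' _ _).trans (hA' u w)
  · simp [hAx, hBz]

end
end
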